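/- In the damped model, assume additionally that C has all entries positive and that 2·(L⁺(g₁) + L⁺(g₂)) < 1 − τ_B(C). Then f has a unique fixed point x* ∈ int(Σ) and for every x ∈ int(Σ) the iterates f^s(x) converge to x* as s → ∞. -/

import Mathlib

open Set Matrix Filter Topology

/-- A weight function for the damped model: either admissible or the constant `1`. -/
def IsWeight (g g' : ℝ → ℝ) : Prop :=
  (∀ x ∈ Set.Icc (0:ℝ) 1, HasDerivWithinAt g (g' x) (Set.Icc (0:ℝ) 1) x) ∧
  ContinuousOn g' (Set.Icc (0:ℝ) 1) ∧
  g 0 = 1 ∧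
  (∀ x ∈ Set.Icc (0:ℝ) 1, 0 < g x) ∧
  ((∀ x ∈ Set.Icc (0:ℝ) 1, 0 < g' x) ∨
    ((∀ x ∈ Set.Icc (0:ℝ) 1, g x = 1) ∧ ∀ x ∈ Set.Icc (0:ℝ) 1, g' x = 0))

/-- The set of values `g'(x)/g(x)` for `x ∈ [0,1]`; its maximum is `L⁺(g)`. -/
def ratioSet (g g' : ℝ → ℝ) : Set ℝ := (fun x => g' x / g x) '' Set.Icc (0:ℝ) 1

/-- The damped transition matrix. -/
noncomputable def Md {n : ℕ} (C : Matrix (Fin n) (Fin n) ℝ) (d : Fin n → ℝ)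
    (γ : ℝ) (g₁ g₂ : ℝ → ℝ) (x : Fin n → ℝ) : Matrix (Fin n) (Fin n) ℝ :=
  Matrix.of fun i j =>
    γ * (C i j * g₁ (x j) / ∑ k, C i k * g₁ (x k)) +
    (1 - γ) * (d j * g₂ (x j) / ∑ k, d k * g₂ (x k))

/-- The map `f(x) = x · M(x)` of the damped model. -/
noncomputable def fd {n : ℕ} (C : Matrix (Fin n) (Fin n) ℝ) (d : Fin n → ℝ)
    (γ : ℝ) (g₁ g₂ : ℝ → ℝ) (x : Fin n → ℝ) : Fin n → ℝ :=
  Matrix.vecMul x (Md C d γ g₁ g₂ x)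

/-- Hilbert's projective metric on positive vectors. -/
noncomputable def dH {n : ℕ} (x y : Fin n → ℝ) : ℝ :=
  ⨆ i, ⨆ j, Real.log ((x i * y j) / (y i * x j))

/-- The set of contraction ratios of `A` for Hilbert's projective metric; its least
upper bound is Birkhoff's coefficient of ergodicity `τ_B(A)`. -/
def birkhoffRatios {n : ℕ} (A : Matrix (Fin n) (Fin n) ℝ) : Set ℝ :=
  {r : ℝ | ∃ x y : Fin n → ℝ, (∀ i, 0 < x i) ∧ (∀ i, 0 < y i) ∧
    (∀ c : ℝ, x ≠ c • y) ∧
    r = dH (Matrix.vecMul x A) (Matrix.vecMul y A) / dH x y}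

/-!
Hilbert's metric is the supremum distance between the vectors of logarithms of coordinate ratios,
and it makes the open simplex a complete metric space; so it suffices that `f` contracts it.

Write `f x = γ • u(x) + (1 - γ) • p(x)`, where `u(x) = ((x / C w) C) * w` coordinatewise with
`w = g₁ ∘ x`, and `p(x)` is the distribution proportional to `d * (g₂ ∘ x)`. Hilbert's metric is
subadditive under coordinatewise products and quotients, and mixing vectors with equal sums at most
adds distances. Hence it is enough to control the weights. For points of the simplex
`∑ i, |x i - y i| ≤ d_H(x, y)`, so if `log ∘ g` is `K`-Lipschitz on `[0, 1]` then
`d_H(g ∘ x, g ∘ y) ≤ K * d_H(x, y)`, and altogether `f` has Lipschitz constant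
`τ + (1 + τ) * K₁ + K₂` with `τ = τ_B(C)`, at most `τ + 2 * (K₁ + K₂)` when `τ ≤ 1`.
-/

lemma mulVec_pos {ι κ : Type*} [Fintype κ] [Nonempty κ] {A : Matrix ι κ ℝ}
    (hA : ∀ i j, 0 < A i j) {x : κ → ℝ} (hx : ∀ j, 0 < x j) (i : ι) : 0 < (A *ᵥ x) i :=
  Finset.sum_pos (fun j _ => mul_pos (hA i j) (hx j)) Finset.univ_nonempty

lemma vecMul_pos {ι κ : Type*} [Fintype ι] [Nonempty ι] {A : Matrix ι κ ℝ}
    (hA : ∀ i j, 0 < A i j) {x : ι → ℝ} (hx : ∀ i, 0 < x i) (j : κ) : 0 < (x ᵥ* A) j :=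
  Finset.sum_pos (fun i _ => mul_pos (hx i) (hA i j)) Finset.univ_nonempty

lemma log_sub_log_le_iff_le_exp_mul {s t c : ℝ} (hs : 0 < s) (ht : 0 < t) :
    Real.log s - Real.log t ≤ c ↔ s ≤ Real.exp c * t := by
  rw [← Real.log_le_log_iff hs (by positivity), Real.log_mul (Real.exp_pos c).ne' ht.ne',
    Real.log_exp, sub_le_iff_le_add]

lemma smul_add_smul_pos {ι : Type*} {u v : ι → ℝ} (hu : ∀ i, 0 < u i)
    (hv : ∀ i, 0 < v i) {s t : ℝ} (hs : 0 ≤ s) (ht : 0 ≤ t) (hst : s + t = 1) (i : ι) :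
    0 < (s • u + t • v) i :=
  convex_Ioi (0 : ℝ) (hu i) (hv i) hs ht hst

lemma smul_add_smul_le_exp_mul {ι : Type*} {u u' v v' : ι → ℝ} (hu' : ∀ i, 0 ≤ u' i)
    (hv' : ∀ i, 0 ≤ v' i) {s t a b : ℝ} (hs : 0 ≤ s) (ht : 0 ≤ t) (ha : 0 ≤ a) (hb : 0 ≤ b)
    (hu : ∀ i, u i ≤ Real.exp a * u' i) (hv : ∀ i, v i ≤ Real.exp b * v' i) (i : ι) :
    (s • u + t • v) i ≤ Real.exp (a + b) * (s • u' + t • v') i := by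
  have huᵢ : u i ≤ Real.exp (a + b) * u' i :=
    (hu i).trans (mul_le_mul_of_nonneg_right (Real.exp_le_exp.2 (by linarith)) (hu' i))
  have hvᵢ : v i ≤ Real.exp (a + b) * v' i :=
    (hv i).trans (mul_le_mul_of_nonneg_right (Real.exp_le_exp.2 (by linarith)) (hv' i))
  calc s * u i + t * v i
      ≤ s * (Real.exp (a + b) * u' i) + t * (Real.exp (a + b) * v' i) := by gcongr
    _ = Real.exp (a + b) * (s * u' i + t * v' i) := by ring

section LogRatio

variable {ι : Type*}

/-- The logarithms of all ratios of coordinates of `x`. On positive vectors Hilbert's projective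
metric is the supremum distance between the images of this map, which is what makes its metric
properties and its completeness available from those of `ι × ι → ℝ`. -/
noncomputable def logRatio (x : ι → ℝ) : ι × ι → ℝ :=
  fun p => Real.log (x p.1) - Real.log (x p.2)

lemma logRatio_mul {x y : ι → ℝ} (hx : ∀ i, 0 < x i) (hy : ∀ i, 0 < y i) :
    logRatio (x * y) = logRatio x + logRatio y := by
  funext p
  simp only [logRatio, Pi.mul_apply, Pi.add_apply, Real.log_mul (hx _).ne' (hy _).ne']
  ring

lemma logRatio_div {x y : ι → ℝ} (hx : ∀ i, 0 < x i) (hy : ∀ i, 0 < y i) :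
    logRatio (x / y) = logRatio x - logRatio y := by
  funext p
  simp only [logRatio, Pi.div_apply, Pi.sub_apply, Real.log_div (hx _).ne' (hy _).ne']
  ring

lemma logRatio_smul {c : ℝ} (hc : c ≠ 0) {x : ι → ℝ} (hx : ∀ i, 0 < x i) :
    logRatio (c • x) = logRatio x := by
  funext p
  simp only [logRatio, Pi.smul_apply, smul_eq_mul, Real.log_mul hc (hx _).ne']
  ring

lemma exists_eq_smul_of_logRatio_eq [Nonempty ι] {x y : ι → ℝ} (hx : ∀ i, 0 < x i)
    (hy : ∀ i, 0 < y i) (h : logRatio x = logRatio y) : ∃ c : ℝ, x = c • y := by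
  obtain ⟨k⟩ := ‹Nonempty ι›
  refine ⟨x k / y k, funext fun i => ?_⟩
  have hlog : Real.log (x i / y i) = Real.log (x k / y k) := by
    have hik := congrFun h (i, k)
    simp only [logRatio] at hik
    rw [Real.log_div (hx i).ne' (hy i).ne', Real.log_div (hx k).ne' (hy k).ne']
    linarith
  rw [Pi.smul_apply, smul_eq_mul,
    ← Real.log_injOn_pos (div_pos (hx i) (hy i)) (div_pos (hx k) (hy k)) hlog,
    div_mul_cancel₀ _ (hy i).ne']

end LogRatio

section HilbertDist

variable {ι κ : Type*} [Fintype ι] [Fintype κ]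

/-- Hilbert's projective metric on the positive vectors indexed by a finite type, without
positivity assumptions in its definition; it agrees with `dH` by `dH_eq_hilbertDist`. -/
noncomputable def hilbertDist (x y : ι → ℝ) : ℝ :=
  dist (logRatio x) (logRatio y)

lemma hilbertDist_nonneg (x y : ι → ℝ) : 0 ≤ hilbertDist x y := dist_nonneg

lemma hilbertDist_mul_le {x x' y y' : ι → ℝ} (hx : ∀ i, 0 < x i) (hx' : ∀ i, 0 < x' i)
    (hy : ∀ i, 0 < y i) (hy' : ∀ i, 0 < y' i) :
    hilbertDist (x * y) (x' * y') ≤ hilbertDist x x' + hilbertDist y y' := by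
  simp only [hilbertDist, logRatio_mul hx hy, logRatio_mul hx' hy']
  exact dist_add_add_le _ _ _ _

lemma hilbertDist_div_le {x x' y y' : ι → ℝ} (hx : ∀ i, 0 < x i) (hx' : ∀ i, 0 < x' i)
    (hy : ∀ i, 0 < y i) (hy' : ∀ i, 0 < y' i) :
    hilbertDist (x / y) (x' / y') ≤ hilbertDist x x' + hilbertDist y y' := by
  simp only [hilbertDist, logRatio_div hx hy, logRatio_div hx' hy']
  exact dist_sub_sub_le _ _ _ _

lemma exists_le_exp_mul [Nonempty ι] {x y : ι → ℝ} (hx : ∀ i, 0 < x i) (hy : ∀ i, 0 < y i) :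
    ∃ a b : ℝ, a + b ≤ hilbertDist x y ∧
      (∀ i, x i ≤ Real.exp a * y i) ∧ ∀ i, y i ≤ Real.exp b * x i := by
  obtain ⟨i, hi⟩ := Finite.exists_max fun i => Real.log (x i) - Real.log (y i)
  obtain ⟨j, hj⟩ := Finite.exists_max fun i => Real.log (y i) - Real.log (x i)
  refine ⟨_, _, ?_, fun k => (log_sub_log_le_iff_le_exp_mul (hx k) (hy k)).1 (hi k),
    fun k => (log_sub_log_le_iff_le_exp_mul (hy k) (hx k)).1 (hj k)⟩
  calc Real.log (x i) - Real.log (y i) + (Real.log (y j) - Real.log (x j))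
      = logRatio x (i, j) - logRatio y (i, j) := by simp only [logRatio]; ring
    _ ≤ dist (logRatio x (i, j)) (logRatio y (i, j)) := le_abs_self _
    _ ≤ hilbertDist x y := dist_le_pi_dist _ _ _

lemma hilbertDist_le_add [Nonempty ι] {x y : ι → ℝ} (hx : ∀ i, 0 < x i) (hy : ∀ i, 0 < y i)
    {a b : ℝ} (hxy : ∀ i, x i ≤ Real.exp a * y i) (hyx : ∀ i, y i ≤ Real.exp b * x i) :
    hilbertDist x y ≤ a + b := by
  have hlog_xy (i : ι) := (log_sub_log_le_iff_le_exp_mul (hx i) (hy i)).2 (hxy i)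
  have hlog_yx (i : ι) := (log_sub_log_le_iff_le_exp_mul (hy i) (hx i)).2 (hyx i)
  refine dist_pi_le_iff'.2 fun ⟨i, j⟩ => abs_le.2 ?_
  simp only [logRatio]
  constructor <;> linarith [hlog_xy i, hlog_xy j, hlog_yx i, hlog_yx j]

lemma nonneg_of_le_exp_mul {x y : ι → ℝ} (hy : 0 < ∑ i, y i) (hsum : ∑ i, x i = ∑ i, y i)
    {a : ℝ} (h : ∀ i, x i ≤ Real.exp a * y i) : 0 ≤ a := by
  have hle : ∑ i, y i ≤ Real.exp a * ∑ i, y i := by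
    rw [Finset.mul_sum]
    exact hsum.ge.trans (Finset.sum_le_sum fun i _ => h i)
  exact Real.one_le_exp_iff.1 ((le_mul_iff_one_le_left hy).1 hle)

lemma hilbertDist_smul_add_smul_le [Nonempty ι] {u u' v v' : ι → ℝ}
    (hu : ∀ i, 0 < u i) (hu' : ∀ i, 0 < u' i) (hv : ∀ i, 0 < v i) (hv' : ∀ i, 0 < v' i)
    (hsu : ∑ i, u i = ∑ i, u' i) (hsv : ∑ i, v i = ∑ i, v' i)
    {s t : ℝ} (hs : 0 ≤ s) (ht : 0 ≤ t) (hst : s + t = 1) :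
    hilbertDist (s • u + t • v) (s • u' + t • v') ≤ hilbertDist u u' + hilbertDist v v' := by
  obtain ⟨a₁, b₁, hab₁, hu₁, hu₁'⟩ := exists_le_exp_mul hu hu'
  obtain ⟨a₂, b₂, hab₂, hv₁, hv₁'⟩ := exists_le_exp_mul hv hv'
  have sum_pos {w : ι → ℝ} (hw : ∀ i, 0 < w i) : 0 < ∑ i, w i :=
    Finset.sum_pos (fun i _ => hw i) Finset.univ_nonempty
  have ha₁ : 0 ≤ a₁ := nonneg_of_le_exp_mul (sum_pos hu') hsu hu₁
  have ha₂ : 0 ≤ a₂ := nonneg_of_le_exp_mul (sum_pos hv') hsv hv₁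
  have hb₁ : 0 ≤ b₁ := nonneg_of_le_exp_mul (sum_pos hu) hsu.symm hu₁'
  have hb₂ : 0 ≤ b₂ := nonneg_of_le_exp_mul (sum_pos hv) hsv.symm hv₁'
  calc hilbertDist (s • u + t • v) (s • u' + t • v')
      ≤ (a₁ + a₂) + (b₁ + b₂) :=
        hilbertDist_le_add (smul_add_smul_pos hu hv hs ht hst)
          (smul_add_smul_pos hu' hv' hs ht hst)
          (smul_add_smul_le_exp_mul (fun i => (hu' i).le) (fun i => (hv' i).le)
            hs ht ha₁ ha₂ hu₁ hv₁)
          (smul_add_smul_le_exp_mul (fun i => (hu i).le) (fun i => (hv i).le)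
            hs ht hb₁ hb₂ hu₁' hv₁')
    _ ≤ hilbertDist u u' + hilbertDist v v' := by linarith

lemma hilbertDist_mulVec_le [Nonempty ι] [Nonempty κ] {A : Matrix ι κ ℝ}
    (hA : ∀ i j, 0 ≤ A i j) {x y : κ → ℝ} (hx : ∀ j, 0 < x j) (hy : ∀ j, 0 < y j)
    (hAx : ∀ i, 0 < (A *ᵥ x) i) (hAy : ∀ i, 0 < (A *ᵥ y) i) :
    hilbertDist (A *ᵥ x) (A *ᵥ y) ≤ hilbertDist x y := by
  have mulVec_le {u v : κ → ℝ} {c : ℝ} (h : ∀ j, u j ≤ Real.exp c * v j) (i : ι) :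
      (A *ᵥ u) i ≤ Real.exp c * (A *ᵥ v) i := by
    rw [← smul_eq_mul, ← Pi.smul_apply, ← Matrix.mulVec_smul]
    exact Finset.sum_le_sum fun j _ => mul_le_mul_of_nonneg_left (h j) (hA i j)
  obtain ⟨a, b, hab, hxy, hyx⟩ := exists_le_exp_mul hx hy
  exact (hilbertDist_le_add hAx hAy (mulVec_le hxy) (mulVec_le hyx)).trans hab

end HilbertDist

/-- The relative interior of the standard simplex, metrized by Hilbert's projective metric. It is
a structure rather than a subtype so as not to inherit the supremum distance of `ι → ℝ`. -/
@[ext]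
structure OpenSimplex (ι : Type*) [Fintype ι] where
  val : ι → ℝ
  pos : ∀ i, 0 < val i
  sum_eq_one : ∑ i, val i = 1

namespace OpenSimplex

variable {ι : Type*} [Fintype ι]

instance : CoeFun (OpenSimplex ι) fun _ => ι → ℝ := ⟨val⟩

lemma mem_stdSimplex (x : OpenSimplex ι) : x.val ∈ stdSimplex ℝ ι :=
  ⟨fun i => (x.pos i).le, x.sum_eq_one⟩

lemma mem_Icc (x : OpenSimplex ι) (i : ι) : x i ∈ Icc (0 : ℝ) 1 :=
  mem_Icc_of_mem_stdSimplex x.mem_stdSimplex i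

instance [Nonempty ι] : Nonempty (OpenSimplex ι) := by
  have hcard : (0 : ℝ) < Fintype.card ι := Nat.cast_pos.2 Fintype.card_pos
  exact ⟨⟨fun _ => (Fintype.card ι : ℝ)⁻¹, fun _ => inv_pos.2 hcard, by simp [hcard.ne']⟩⟩

lemma apply_eq_inv_sum_exp (x : OpenSimplex ι) (i : ι) :
    x i = (∑ j, Real.exp (logRatio x (j, i)))⁻¹ := by
  have hexp (j : ι) : Real.exp (logRatio x (j, i)) = x j / x i := by
    rw [logRatio, Real.exp_sub, Real.exp_log (x.pos j), Real.exp_log (x.pos i)]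
  simp only [hexp, ← Finset.sum_div, x.sum_eq_one, one_div, inv_inv]

lemma logRatio_injective : Function.Injective fun x : OpenSimplex ι => logRatio x := by
  intro x y hxy
  ext i
  rw [x.apply_eq_inv_sum_exp, y.apply_eq_inv_sum_exp, show logRatio x = logRatio y from hxy]

noncomputable instance : MetricSpace (OpenSimplex ι) :=
  MetricSpace.induced (fun x => logRatio x) logRatio_injective inferInstance

lemma isometry_logRatio : Isometry fun x : OpenSimplex ι => logRatio x :=
  Isometry.of_dist_eq fun _ _ => rfl

lemma range_logRatio [Nonempty ι] : range (fun x : OpenSimplex ι => logRatio x) =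
    {a | ∀ i j k, a (i, j) + a (j, k) = a (i, k)} := by
  ext a
  constructor
  · rintro ⟨x, rfl⟩ i j k
    simp only [logRatio]
    ring
  · intro ha
    obtain ⟨k⟩ := ‹Nonempty ι›
    have hS : 0 < ∑ j, Real.exp (a (j, k)) :=
      Finset.sum_pos (fun j _ => Real.exp_pos _) ⟨k, Finset.mem_univ k⟩
    refine ⟨⟨fun i => Real.exp (a (i, k)) / ∑ j, Real.exp (a (j, k)),
      fun i => div_pos (Real.exp_pos _) hS, by rw [← Finset.sum_div, div_self hS.ne']⟩, ?_⟩
    funext ⟨i, j⟩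
    simp only [logRatio, Real.log_div (Real.exp_pos _).ne' hS.ne', Real.log_exp]
    linarith [ha i j k]

instance [Nonempty ι] : CompleteSpace (OpenSimplex ι) := by
  rw [completeSpace_iff_isComplete_range isometry_logRatio.isUniformInducing, range_logRatio]
  refine IsClosed.isComplete ?_
  simp only [Set.ofPred_forall]
  exact isClosed_iInter fun i => isClosed_iInter fun j => isClosed_iInter fun k =>
    isClosed_eq (by fun_prop) (by fun_prop)

lemma continuous_val : Continuous (val : OpenSimplex ι → ι → ℝ) := by
  refine continuous_pi fun i => ?_
  simp only [apply_eq_inv_sum_exp]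
  refine Continuous.inv₀ ?_ fun x => ?_
  · exact continuous_finsetSum _ fun j _ =>
      Real.continuous_exp.comp ((continuous_apply (j, i)).comp isometry_logRatio.continuous)
  · have := x.pos i
    rw [x.apply_eq_inv_sum_exp] at this
    exact (inv_pos.1 this).ne'

lemma sum_abs_sub_le_dist (x y : OpenSimplex ι) : ∑ i, |x i - y i| ≤ dist x y := by
  rcases isEmpty_or_nonempty ι
  · simp
  obtain ⟨a, b, hab, hxy, hyx⟩ := exists_le_exp_mul x.pos y.pos
  have ha : 0 ≤ a := nonneg_of_le_exp_mul (y.sum_eq_one ▸ one_pos)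
    (x.sum_eq_one.trans y.sum_eq_one.symm) hxy
  have hb : 0 ≤ b := nonneg_of_le_exp_mul (x.sum_eq_one ▸ one_pos)
    (y.sum_eq_one.trans x.sum_eq_one.symm) hyx
  have sub_le {s t c : ℝ} (hs : 0 < s) (h : s ≤ Real.exp c * t) : s - t ≤ c * s := by
    have h₁ : Real.exp (-c) * s ≤ t := by rwa [Real.exp_neg, inv_mul_le_iff₀ (Real.exp_pos c)]
    have h₂ := mul_le_mul_of_nonneg_right (Real.one_sub_le_exp_neg c) hs.le
    linarith
  have habs (i : ι) : |x i - y i| ≤ a * x i + b * y i := by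
    have hx := sub_le (x.pos i) (hxy i)
    have hy := sub_le (y.pos i) (hyx i)
    have hax := mul_nonneg ha (x.pos i).le
    have hby := mul_nonneg hb (y.pos i).le
    exact abs_le.2 ⟨by linarith, by linarith⟩
  calc ∑ i, |x i - y i| ≤ ∑ i, (a * x i + b * y i) := Finset.sum_le_sum fun i _ => habs i
    _ = a + b := by
      rw [Finset.sum_add_distrib, ← Finset.mul_sum, ← Finset.mul_sum, x.sum_eq_one,
        y.sum_eq_one, mul_one, mul_one]
    _ ≤ dist x y := hab

lemma hilbertDist_comp_le {g : ℝ → ℝ} {K : NNReal}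
    (hg : LipschitzOnWith K (fun t => Real.log (g t)) (Icc 0 1)) (x y : OpenSimplex ι) :
    hilbertDist (g ∘ x) (g ∘ y) ≤ K * dist x y := by
  refine (dist_pi_le_iff (by positivity)).2 fun ⟨i, j⟩ => ?_
  rcases eq_or_ne i j with rfl | hij
  · simp only [logRatio, sub_self, dist_self]
    positivity
  have hlog (k : ι) : dist (Real.log (g (x k))) (Real.log (g (y k))) ≤ K * |x k - y k| :=
    hg.dist_le_mul _ (x.mem_Icc k) _ (y.mem_Icc k)
  calc dist (logRatio (g ∘ x) (i, j)) (logRatio (g ∘ y) (i, j))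
      ≤ K * |x i - y i| + K * |x j - y j| := (dist_sub_sub_le _ _ _ _).trans
        (add_le_add (hlog i) (hlog j))
    _ = K * (|x i - y i| + |x j - y j|) := by ring
    _ ≤ K * ∑ k, |x k - y k| := by
      gcongr
      exact Finset.add_le_sum (fun k _ => abs_nonneg (x k - y k)) (Finset.mem_univ i)
        (Finset.mem_univ j) hij
    _ ≤ K * dist x y := by gcongr; exact sum_abs_sub_le_dist x y

theorem exists_fixedPoint_of_hilbertDist_le [Nonempty ι] {f : (ι → ℝ) → ι → ℝ}
    (hpos : ∀ (x : OpenSimplex ι) (i : ι), 0 < f x i)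
    (hsum : ∀ x : OpenSimplex ι, ∑ i, f x i = 1) {q : ℝ} (hq : q < 1)
    (hf : ∀ x y : OpenSimplex ι, hilbertDist (f x) (f y) ≤ q * dist x y) :
    ∃ z : OpenSimplex ι, f z = z ∧ (∀ y : OpenSimplex ι, f y = y → y = z) ∧
      ∀ x : OpenSimplex ι, Tendsto (fun s : ℕ => f^[s] x) atTop (𝓝 z) := by
  let F : OpenSimplex ι → OpenSimplex ι := fun x => ⟨f x, hpos x, hsum x⟩
  have hF : ContractingWith q.toNNReal F :=
    ⟨Real.toNNReal_lt_one.2 hq, LipschitzWith.of_dist_le' hf⟩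
  refine ⟨hF.fixedPoint, congrArg val hF.fixedPoint_isFixedPt,
    fun y hy => hF.fixedPoint_unique (OpenSimplex.ext hy), fun x => ?_⟩
  have hiter (s : ℕ) : (F^[s] x).val = f^[s] x :=
    (show Function.Semiconj val F f from fun _ => rfl).iterate_right s x
  simpa only [Function.comp_def, hiter] using
    (continuous_val.tendsto _).comp (hF.tendsto_iterate_fixedPoint x)

end OpenSimplex

section DampedModel

/-- The distribution proportional to `d * w`; with `w j = g₂ (x j)` it is the teleportation term
of the damped model. -/
noncomputable def weightedDistribution {ι : Type*} [Fintype ι] (d w : ι → ℝ) : ι → ℝ :=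
  (∑ k, d k * w k)⁻¹ • (d * w)

/-- One step from `x` of the Markov chain with transition probabilities
`C i j * w j / ∑ k, C i k * w k`; with `w j = g₁ (x j)` it is the link-following term of the damped
model. The chain is applied as division by the row sums, multiplication by `C`, and scaling by
`w`. -/
noncomputable def weightedStep {ι : Type*} [Fintype ι] (C : Matrix ι ι ℝ) (w x : ι → ℝ) : ι → ℝ :=
  ((x / (C *ᵥ w)) ᵥ* C) * w

section Terms

variable {ι : Type*} [Fintype ι] [Nonempty ι] {C : Matrix ι ι ℝ} {d w w' x : ι → ℝ}

lemma sum_mul_pos (hd : ∀ i, 0 < d i) (hw : ∀ i, 0 < w i) : 0 < ∑ k, d k * w k :=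
  Finset.sum_pos (fun k _ => mul_pos (hd k) (hw k)) Finset.univ_nonempty

lemma weightedDistribution_pos (hd : ∀ i, 0 < d i) (hw : ∀ i, 0 < w i) (i : ι) :
    0 < weightedDistribution d w i :=
  mul_pos (inv_pos.2 (sum_mul_pos hd hw)) (mul_pos (hd i) (hw i))

lemma sum_weightedDistribution (hd : ∀ i, 0 < d i) (hw : ∀ i, 0 < w i) :
    ∑ i, weightedDistribution d w i = 1 := by
  simp only [weightedDistribution, Pi.smul_apply, Pi.mul_apply, smul_eq_mul, ← Finset.mul_sum]
  exact inv_mul_cancel₀ (sum_mul_pos hd hw).ne'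

lemma hilbertDist_weightedDistribution (hd : ∀ i, 0 < d i) (hw : ∀ i, 0 < w i)
    (hw' : ∀ i, 0 < w' i) :
    hilbertDist (weightedDistribution d w) (weightedDistribution d w') = hilbertDist w w' := by
  have hlog {v : ι → ℝ} (hv : ∀ i, 0 < v i) :
      logRatio (weightedDistribution d v) = logRatio d + logRatio v := by
    have hdv (i : ι) : 0 < (d * v) i := mul_pos (hd i) (hv i)
    rw [weightedDistribution, logRatio_smul (inv_ne_zero (sum_mul_pos hd hv).ne') hdv,
      logRatio_mul hd hv]
  rw [hilbertDist, hlog hw, hlog hw', dist_add_left, hilbertDist]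

lemma div_mulVec_pos (hC : ∀ i j, 0 < C i j) (hw : ∀ i, 0 < w i) (hx : ∀ i, 0 < x i) (i : ι) :
    0 < (x / (C *ᵥ w)) i :=
  div_pos (hx i) (mulVec_pos hC hw i)

lemma weightedStep_pos (hC : ∀ i j, 0 < C i j) (hw : ∀ i, 0 < w i) (hx : ∀ i, 0 < x i) (i : ι) :
    0 < weightedStep C w x i :=
  mul_pos (vecMul_pos hC (div_mulVec_pos hC hw hx) i) (hw i)

lemma sum_weightedStep (hC : ∀ i j, 0 < C i j) (hw : ∀ i, 0 < w i) (x : ι → ℝ) :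
    ∑ i, weightedStep C w x i = ∑ i, x i := by
  calc ∑ i, weightedStep C w x i
      = (x / (C *ᵥ w)) ⬝ᵥ (C *ᵥ w) := (Matrix.dotProduct_mulVec _ _ _).symm
    _ = ∑ i, x i := Finset.sum_congr rfl fun i _ => div_mul_cancel₀ _ (mulVec_pos hC hw i).ne'

end Terms

variable {n : ℕ} {C : Matrix (Fin n) (Fin n) ℝ} {d : Fin n → ℝ} {g₁ g₂ : ℝ → ℝ} {γ τ : ℝ}

lemma fd_eq (C : Matrix (Fin n) (Fin n) ℝ) (d : Fin n → ℝ) (γ : ℝ) (g₁ g₂ : ℝ → ℝ)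
    (x : OpenSimplex (Fin n)) :
    fd C d γ g₁ g₂ x =
      γ • weightedStep C (g₁ ∘ x) x + (1 - γ) • weightedDistribution d (g₂ ∘ x) := by
  funext j
  calc ∑ i, x i * (γ * (C i j * g₁ (x j) / ∑ k, C i k * g₁ (x k)) +
        (1 - γ) * (d j * g₂ (x j) / ∑ k, d k * g₂ (x k)))
      = γ * ((∑ i, x i / (∑ k, C i k * g₁ (x k)) * C i j) * g₁ (x j)) +
        (∑ i, x i) * ((1 - γ) * (d j * g₂ (x j) / ∑ k, d k * g₂ (x k))) := by
        simp only [mul_add, Finset.sum_add_distrib, Finset.sum_mul, Finset.mul_sum]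
        congr 1
        exact Finset.sum_congr rfl fun i _ => by ring
    _ = γ * ((∑ i, x i / (∑ k, C i k * g₁ (x k)) * C i j) * g₁ (x j)) +
        (1 - γ) * ((∑ k, d k * g₂ (x k))⁻¹ * (d j * g₂ (x j))) := by
        rw [x.sum_eq_one]
        ring

lemma dH_eq_hilbertDist {x y : Fin n → ℝ} (hx : ∀ i, 0 < x i) (hy : ∀ i, 0 < y i) :
    dH x y = hilbertDist x y := by
  have hlog (i j : Fin n) :
      Real.log ((x i * y j) / (y i * x j)) = logRatio x (i, j) - logRatio y (i, j) := by
    rw [Real.log_div (mul_pos (hx i) (hy j)).ne' (mul_pos (hy i) (hx j)).ne',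
      Real.log_mul (hx i).ne' (hy j).ne', Real.log_mul (hy i).ne' (hx j).ne']
    simp only [logRatio]
    ring
  have le_dH (i j : Fin n) : logRatio x (i, j) - logRatio y (i, j) ≤ dH x y := by
    rw [← hlog]
    exact le_ciSup_of_le (finite_range _).bddAbove i
      (le_ciSup (f := fun j => Real.log ((x i * y j) / (y i * x j))) (finite_range _).bddAbove j)
  apply le_antisymm
  · refine Real.iSup_le (fun i => Real.iSup_le (fun j => ?_) dist_nonneg) dist_nonneg
    rw [hlog]
    exact (le_abs_self _).trans (dist_le_pi_dist (logRatio x) (logRatio y) (i, j))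
  · rcases isEmpty_or_nonempty (Fin n)
    · simp [hilbertDist, dH, Subsingleton.elim (logRatio x) (logRatio y)]
    refine dist_pi_le_iff'.2 fun ⟨i, j⟩ => abs_le.2 ⟨?_, le_dH i j⟩
    have := le_dH j i
    simp only [logRatio] at this ⊢
    linarith

section Contraction

variable [NeZero n]

lemma hilbertDist_vecMul_le (hC : ∀ i j, 0 < C i j) (hτ : τ ∈ upperBounds (birkhoffRatios C))
    {x y : Fin n → ℝ} (hx : ∀ i, 0 < x i) (hy : ∀ i, 0 < y i) :
    hilbertDist (x ᵥ* C) (y ᵥ* C) ≤ τ * hilbertDist x y := by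
  by_cases hxy : ∃ c : ℝ, x = c • y
  · obtain ⟨c, rfl⟩ := hxy
    have hc : c ≠ 0 := fun hc => by simpa [hc] using hx 0
    rw [Matrix.smul_vecMul, hilbertDist, hilbertDist, logRatio_smul hc hy,
      logRatio_smul hc (vecMul_pos hC hy), dist_self, dist_self, mul_zero]
  · have hpos : 0 < hilbertDist x y :=
      dist_pos.2 fun h => hxy (exists_eq_smul_of_logRatio_eq hx hy h)
    rw [← div_le_iff₀ hpos, ← dH_eq_hilbertDist hx hy,
      ← dH_eq_hilbertDist (vecMul_pos hC hx) (vecMul_pos hC hy)]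
    exact hτ ⟨x, y, hx, hy, not_exists.1 hxy, rfl⟩

lemma hilbertDist_weightedStep_le (hC : ∀ i j, 0 < C i j) (hτ : τ ∈ upperBounds (birkhoffRatios C))
    (hτ₀ : 0 ≤ τ) {w w' x x' : Fin n → ℝ} (hw : ∀ i, 0 < w i) (hw' : ∀ i, 0 < w' i)
    (hx : ∀ i, 0 < x i) (hx' : ∀ i, 0 < x' i) :
    hilbertDist (weightedStep C w x) (weightedStep C w' x') ≤
      τ * hilbertDist x x' + (1 + τ) * hilbertDist w w' := by
  have hu := div_mulVec_pos hC hw hx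
  have hu' := div_mulVec_pos hC hw' hx'
  have hrowSums : hilbertDist (C *ᵥ w) (C *ᵥ w') ≤ hilbertDist w w' :=
    hilbertDist_mulVec_le (fun i j => (hC i j).le) hw hw' (mulVec_pos hC hw) (mulVec_pos hC hw')
  calc hilbertDist (weightedStep C w x) (weightedStep C w' x')
      ≤ hilbertDist ((x / (C *ᵥ w)) ᵥ* C) ((x' / (C *ᵥ w')) ᵥ* C) + hilbertDist w w' :=
        hilbertDist_mul_le (vecMul_pos hC hu) (vecMul_pos hC hu') hw hw'
    _ ≤ τ * hilbertDist (x / (C *ᵥ w)) (x' / (C *ᵥ w')) + hilbertDist w w' := by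
        gcongr
        exact hilbertDist_vecMul_le hC hτ hu hu'
    _ ≤ τ * (hilbertDist x x' + hilbertDist w w') + hilbertDist w w' := by
        gcongr
        exact (hilbertDist_div_le hx hx' (mulVec_pos hC hw) (mulVec_pos hC hw')).trans (by gcongr)
    _ = τ * hilbertDist x x' + (1 + τ) * hilbertDist w w' := by ring

lemma fd_pos (hC : ∀ i j, 0 < C i j) (hd : ∀ i, 0 < d i) (hγ : γ ∈ Icc (0 : ℝ) 1)
    (hg₁ : ∀ t ∈ Icc (0 : ℝ) 1, 0 < g₁ t) (hg₂ : ∀ t ∈ Icc (0 : ℝ) 1, 0 < g₂ t)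
    (x : OpenSimplex (Fin n)) (i : Fin n) : 0 < fd C d γ g₁ g₂ x i := by
  rw [fd_eq]
  exact smul_add_smul_pos (weightedStep_pos hC (fun k => hg₁ _ (x.mem_Icc k)) x.pos)
    (weightedDistribution_pos hd fun k => hg₂ _ (x.mem_Icc k)) hγ.1 (sub_nonneg.2 hγ.2)
    (add_sub_cancel _ _) i

lemma sum_fd (hC : ∀ i j, 0 < C i j) (hd : ∀ i, 0 < d i)
    (hg₁ : ∀ t ∈ Icc (0 : ℝ) 1, 0 < g₁ t) (hg₂ : ∀ t ∈ Icc (0 : ℝ) 1, 0 < g₂ t)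
    (x : OpenSimplex (Fin n)) : ∑ i, fd C d γ g₁ g₂ x i = 1 := by
  simp only [fd_eq, Pi.add_apply, Pi.smul_apply, smul_eq_mul, Finset.sum_add_distrib,
    ← Finset.mul_sum]
  rw [sum_weightedStep (w := g₁ ∘ x) hC fun k => hg₁ _ (x.mem_Icc k), x.sum_eq_one,
    sum_weightedDistribution (w := g₂ ∘ x) hd fun k => hg₂ _ (x.mem_Icc k)]
  ring

theorem hilbertDist_fd_le (hC : ∀ i j, 0 < C i j) (hd : ∀ i, 0 < d i) (hγ : γ ∈ Icc (0 : ℝ) 1)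
    (hg₁ : ∀ t ∈ Icc (0 : ℝ) 1, 0 < g₁ t) (hg₂ : ∀ t ∈ Icc (0 : ℝ) 1, 0 < g₂ t)
    {K₁ K₂ : NNReal} (hK₁ : LipschitzOnWith K₁ (fun t => Real.log (g₁ t)) (Icc 0 1))
    (hK₂ : LipschitzOnWith K₂ (fun t => Real.log (g₂ t)) (Icc 0 1))
    (hτ : τ ∈ upperBounds (birkhoffRatios C)) (hτ₀ : 0 ≤ τ) (x y : OpenSimplex (Fin n)) :
    hilbertDist (fd C d γ g₁ g₂ x) (fd C d γ g₁ g₂ y) ≤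
      (τ + ((1 + τ) * K₁ + K₂)) * dist x y := by
  have hg₁x (z : OpenSimplex (Fin n)) (k : Fin n) : 0 < (g₁ ∘ z) k := hg₁ _ (z.mem_Icc k)
  have hg₂x (z : OpenSimplex (Fin n)) (k : Fin n) : 0 < (g₂ ∘ z) k := hg₂ _ (z.mem_Icc k)
  have hstep_sum (z : OpenSimplex (Fin n)) : ∑ i, weightedStep C (g₁ ∘ z) z i = 1 :=
    (sum_weightedStep hC (hg₁x z) z).trans z.sum_eq_one
  have hdistr_sum (z : OpenSimplex (Fin n)) : ∑ i, weightedDistribution d (g₂ ∘ z) i = 1 :=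
    sum_weightedDistribution hd (hg₂x z)
  rw [fd_eq, fd_eq]
  calc _ ≤ hilbertDist (weightedStep C (g₁ ∘ x) x) (weightedStep C (g₁ ∘ y) y) +
        hilbertDist (weightedDistribution d (g₂ ∘ x)) (weightedDistribution d (g₂ ∘ y)) :=
        hilbertDist_smul_add_smul_le (weightedStep_pos hC (hg₁x x) x.pos)
          (weightedStep_pos hC (hg₁x y) y.pos) (weightedDistribution_pos hd (hg₂x x))
          (weightedDistribution_pos hd (hg₂x y)) ((hstep_sum x).trans (hstep_sum y).symm)
          ((hdistr_sum x).trans (hdistr_sum y).symm) hγ.1 (sub_nonneg.2 hγ.2) (add_sub_cancel _ _)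
    _ ≤ (τ * dist x y + (1 + τ) * hilbertDist (g₁ ∘ x) (g₁ ∘ y)) +
        hilbertDist (g₂ ∘ x) (g₂ ∘ y) :=
        add_le_add (hilbertDist_weightedStep_le hC hτ hτ₀ (hg₁x x) (hg₁x y) x.pos y.pos)
          (hilbertDist_weightedDistribution hd (hg₂x x) (hg₂x y)).le
    _ ≤ (τ * dist x y + (1 + τ) * (K₁ * dist x y)) + K₂ * dist x y := by
        gcongr
        · exact OpenSimplex.hilbertDist_comp_le hK₁ x y
        · exact OpenSimplex.hilbertDist_comp_le hK₂ x y
    _ = (τ + ((1 + τ) * K₁ + K₂)) * dist x y := by ring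

lemma birkhoffRatios_nonneg (hC : ∀ i j, 0 < C i j) {r : ℝ} (hr : r ∈ birkhoffRatios C) :
    0 ≤ r := by
  obtain ⟨x, y, hx, hy, -, rfl⟩ := hr
  rw [dH_eq_hilbertDist hx hy, dH_eq_hilbertDist (vecMul_pos hC hx) (vecMul_pos hC hy)]
  exact div_nonneg (hilbertDist_nonneg _ _) (hilbertDist_nonneg _ _)

end Contraction

end DampedModel

namespace IsWeight

variable {g g' : ℝ → ℝ}

lemma pos (hg : IsWeight g g') : ∀ t ∈ Icc (0 : ℝ) 1, 0 < g t := hg.2.2.2.1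

lemma deriv_nonneg (hg : IsWeight g g') {t : ℝ} (ht : t ∈ Icc (0 : ℝ) 1) : 0 ≤ g' t := by
  obtain ⟨-, -, -, -, hpos | ⟨-, hzero⟩⟩ := hg
  · exact (hpos t ht).le
  · exact (hzero t ht).ge

lemma nonneg_of_mem_ratioSet (hg : IsWeight g g') {r : ℝ} (hr : r ∈ ratioSet g g') : 0 ≤ r := by
  obtain ⟨t, ht, rfl⟩ := hr
  exact div_nonneg (hg.deriv_nonneg ht) (hg.pos t ht).le

lemma lipschitzOnWith_log (hg : IsWeight g g') {L : NNReal}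
    (hL : (L : ℝ) ∈ upperBounds (ratioSet g g')) :
    LipschitzOnWith L (fun t => Real.log (g t)) (Icc 0 1) := by
  refine (convex_Icc 0 1).lipschitzOnWith_of_nnnorm_hasDerivWithin_le
    (fun t ht => (hg.1 t ht).log (hg.pos t ht).ne') fun t ht => ?_
  have hmem : g' t / g t ∈ ratioSet g g' := ⟨t, ht, rfl⟩
  rw [← NNReal.coe_le_coe, coe_nnnorm, Real.norm_of_nonneg (hg.nonneg_of_mem_ratioSet hmem)]
  exact hL hmem

end IsWeight

theorem damped_fd_contraction_unique_fixed_point_general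
    {n : ℕ} (hn : 0 < n) {C : Matrix (Fin n) (Fin n) ℝ} (hC : ∀ i j, 0 < C i j)
    {d : Fin n → ℝ} (hd : ∀ i, 0 < d i) {γ : ℝ} (hγ : γ ∈ Icc (0 : ℝ) 1) {g₁ g₂ : ℝ → ℝ}
    (hg₁ : ∀ t ∈ Icc (0 : ℝ) 1, 0 < g₁ t) (hg₂ : ∀ t ∈ Icc (0 : ℝ) 1, 0 < g₂ t)
    {K₁ K₂ : NNReal} (hK₁ : LipschitzOnWith K₁ (fun t => Real.log (g₁ t)) (Icc 0 1))
    (hK₂ : LipschitzOnWith K₂ (fun t => Real.log (g₂ t)) (Icc 0 1))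
    {τ : ℝ} (hτ : τ ∈ upperBounds (birkhoffRatios C)) (hτ₀ : 0 ≤ τ)
    (hsmall : (1 + τ) * K₁ + K₂ < 1 - τ) :
    ∃ xs ∈ stdSimplex ℝ (Fin n), (∀ i, 0 < xs i) ∧ fd C d γ g₁ g₂ xs = xs ∧
      (∀ y ∈ stdSimplex ℝ (Fin n), (∀ i, 0 < y i) → fd C d γ g₁ g₂ y = y → y = xs) ∧
      ∀ x ∈ stdSimplex ℝ (Fin n), (∀ i, 0 < x i) →
        Tendsto (fun s : ℕ => (fd C d γ g₁ g₂)^[s] x) atTop (𝓝 xs) := by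
  have : NeZero n := ⟨hn.ne'⟩
  obtain ⟨z, hfix, huniq, hlim⟩ := OpenSimplex.exists_fixedPoint_of_hilbertDist_le
    (fd_pos hC hd hγ hg₁ hg₂) (sum_fd hC hd hg₁ hg₂) (by linarith)
    (hilbertDist_fd_le hC hd hγ hg₁ hg₂ hK₁ hK₂ hτ hτ₀)
  exact ⟨z, z.mem_stdSimplex, z.pos, hfix,
    fun y hy hpos hfy => congrArg OpenSimplex.val (huniq ⟨y, hpos, hy.2⟩ hfy),
    fun x hx hpos => hlim ⟨x, hpos, hx.2⟩⟩

theorem damped_fd_contraction_unique_fixed_point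
    (n : ℕ) (hn : 0 < n) (C : Matrix (Fin n) (Fin n) ℝ)
    (hCpos : ∀ i j, 0 < C i j)
    (d : Fin n → ℝ) (hd : ∀ i, 0 < d i)
    (γ : ℝ) (hγ0 : 0 < γ) (hγ1 : γ < 1)
    (g₁ g₁' g₂ g₂' : ℝ → ℝ) (hg₁ : IsWeight g₁ g₁') (hg₂ : IsWeight g₂ g₂')
    (Lp₁ Lp₂ : ℝ) (hLp₁ : IsGreatest (ratioSet g₁ g₁') Lp₁)
    (hLp₂ : IsGreatest (ratioSet g₂ g₂') Lp₂)
    (τ : ℝ) (hτ : IsLUB (birkhoffRatios C) τ)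
    (hsmall : 2 * (Lp₁ + Lp₂) < 1 - τ) :
    ∃ xs ∈ stdSimplex ℝ (Fin n), (∀ i, 0 < xs i) ∧ fd C d γ g₁ g₂ xs = xs ∧
      (∀ y ∈ stdSimplex ℝ (Fin n), (∀ i, 0 < y i) → fd C d γ g₁ g₂ y = y → y = xs) ∧
      ∀ x ∈ stdSimplex ℝ (Fin n), (∀ i, 0 < x i) →
        Tendsto (fun s : ℕ => (fd C d γ g₁ g₂)^[s] x) atTop (𝓝 xs) := by
  have : NeZero n := ⟨hn.ne'⟩
  lift Lp₁ to NNReal using hg₁.nonneg_of_mem_ratioSet hLp₁.1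
  lift Lp₂ to NNReal using hg₂.nonneg_of_mem_ratioSet hLp₂.1
  obtain ⟨r, hr⟩ := hτ.nonempty
  have hτ₀ : 0 ≤ τ := (birkhoffRatios_nonneg hCpos hr).trans (hτ.1 hr)
  refine damped_fd_contraction_unique_fixed_point_general hn hCpos hd ⟨hγ0.le, hγ1.le⟩
    hg₁.pos hg₂.pos (hg₁.lipschitzOnWith_log hLp₁.2) (hg₂.lipschitzOnWith_log hLp₂.2)
    hτ.1 hτ₀ ?_
  nlinarith [Lp₁.coe_nonneg, Lp₂.coe_nonneg]
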